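/- (Composition identity reducing mixed orders.) Let 0 < α < 1, 0 < β ≤ 1, set ξ := (1−β)(1−α), and let l, m be natural numbers with l ≤ m. Let a < b, Ψ : ℝ → ℝ strictly increasing and continuously differentiable on [a,b] with Ψ'(t) > 0 for all t ∈ [a,b], and g : ℝ → ℝ continuous on [a,b]. Then for every x ∈ (a,b): (^{RL}D^{α+ξ−l;Ψ}(I^{ξ+m−l;Ψ} g))(x) = (^{RL}D^{α−m;Ψ} g)(x). -/

import Mathlib

open Real

/-- Generalized binomial coefficient `binom(γ, n) = γ(γ-1)⋯(γ-n+1)/n!`. -/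
noncomputable def genBinom (γ : ℝ) (n : ℕ) : ℝ :=
  (∏ i ∈ Finset.range n, (γ - (i : ℝ))) / (n.factorial : ℝ)

/-- Ψ-Riemann–Liouville fractional integral of order `α` with base point `a`;
by convention the order-0 integral is the identity. -/
noncomputable def psiI (a : ℝ) (Ψ f : ℝ → ℝ) (α : ℝ) (x : ℝ) : ℝ :=
  if α = 0 then f x
  else (Real.Gamma α)⁻¹ * ∫ t in a..x, deriv Ψ t * (Ψ x - Ψ t) ^ (α - 1) * f t

/-- Ψ-Riemann–Liouville fractional derivative of order `γ` (for `γ ≤ 0` it is the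
fractional integral of order `-γ`, the order-0 case being the identity). -/
noncomputable def psiRLD (a : ℝ) (Ψ f : ℝ → ℝ) (γ : ℝ) (x : ℝ) : ℝ :=
  if γ ≤ 0 then psiI a Ψ f (-γ) x
  else (deriv Ψ x)⁻¹ * deriv (fun y => psiI a Ψ f (1 - γ) y) x

/-- Ψ-Caputo fractional derivative of order `γ` (for `γ ≤ 0` it is the
fractional integral of order `-γ`). -/
noncomputable def psiCD (a : ℝ) (Ψ f : ℝ → ℝ) (γ : ℝ) (x : ℝ) : ℝ :=
  if γ ≤ 0 then psiI a Ψ f (-γ) x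
  else psiI a Ψ (fun t => (deriv Ψ t)⁻¹ * deriv f t) (1 - γ) x

/-- Ψ-Hilfer fractional derivative of order `α` and type `β`. -/
noncomputable def psiHD (a : ℝ) (Ψ f : ℝ → ℝ) (α β : ℝ) (x : ℝ) : ℝ :=
  psiI a Ψ
    (fun y => (deriv Ψ y)⁻¹ * deriv (fun z => psiI a Ψ f ((1 - β) * (1 - α)) z) y)
    (β * (1 - α)) x

/-- Classical Riemann–Liouville fractional integral with base point `a`. -/
noncomputable def rlI (a : ℝ) (α : ℝ) (f : ℝ → ℝ) (x : ℝ) : ℝ :=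
  if α = 0 then f x
  else (Real.Gamma α)⁻¹ * ∫ t in a..x, (x - t) ^ (α - 1) * f t

/-- Classical Riemann–Liouville fractional derivative (fractional integral for `γ ≤ 0`). -/
noncomputable def rlD (a : ℝ) (γ : ℝ) (f : ℝ → ℝ) (x : ℝ) : ℝ :=
  if γ ≤ 0 then rlI a (-γ) f x
  else deriv (fun y => rlI a (1 - γ) f y) x

/-- Classical Caputo fractional derivative (fractional integral for `γ ≤ 0`). -/
noncomputable def capD (a : ℝ) (γ : ℝ) (f : ℝ → ℝ) (x : ℝ) : ℝ :=
  if γ ≤ 0 then rlI a (-γ) f x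
  else rlI a (1 - γ) (deriv f) x

/-- Classical Hilfer fractional derivative of order `α` and type `β`. -/
noncomputable def hilD (a : ℝ) (α β : ℝ) (f : ℝ → ℝ) (x : ℝ) : ℝ :=
  rlI a (β * (1 - α))
    (fun y => deriv (fun z => rlI a ((1 - β) * (1 - α)) f z) y) x

/-- Hadamard fractional integral with base point `a`. -/
noncomputable def hadI (a : ℝ) (α : ℝ) (f : ℝ → ℝ) (x : ℝ) : ℝ :=
  if α = 0 then f x
  else (Real.Gamma α)⁻¹ * ∫ t in a..x, (Real.log x - Real.log t) ^ (α - 1) * f t / t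

/-- Caputo–Hadamard fractional derivative (Hadamard fractional integral for `γ ≤ 0`). -/
noncomputable def chD (a : ℝ) (γ : ℝ) (f : ℝ → ℝ) (x : ℝ) : ℝ :=
  if γ ≤ 0 then hadI a (-γ) f x
  else hadI a (1 - γ) (fun t => t * deriv f t) x

/-- `h` is real-analytic with a power series converging on all of `ℝ`. -/
def EntireReal (h : ℝ → ℝ) : Prop :=
  ∃ p : FormalMultilinearSeries ℝ ℝ ℝ, HasFPowerSeriesOnBall h p 0 ⊤

/-!
The substitution `u = Ψ t` turns the `Ψ`-integral into the classical Riemann–Liouville integral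
based at `Ψ a`. There, Fubini on a triangle and the beta integral give the semigroup law
`I^p I^q = I^(p+q)`, whose case `p = 1`, together with the continuity of `I^q f`, yields
`d/dx I^(1+q) f = I^q f`. Hence `D^γ I^δ g`, which for `0 < γ` is `(Ψ')⁻¹ d/dx I^(1-γ+δ) g`,
equals `I^(δ-γ) g` if `γ ≤ δ` and is `D^(γ-δ) g` by definition if `δ < γ`.
-/

section

open MeasureTheory Set Filter Topology
open ProbabilityTheory (beta beta_pos beta_eq_betaIntegralReal)

lemma integral_rpow_mul_sub_rpow {p q c : ℝ} (hp : 0 < p) (hq : 0 < q) (hc : 0 < c) :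
    ∫ x in (0 : ℝ)..c, x ^ (p - 1) * (c - x) ^ (q - 1) = c ^ (p + q - 1) * beta p q := by
  have hcomplex : ((∫ x in (0 : ℝ)..c, x ^ (p - 1) * (c - x) ^ (q - 1) : ℝ) : ℂ) =
      ((c ^ (p + q - 1) : ℝ) : ℂ) * Complex.betaIntegral p q := by
    rw [Complex.ofReal_cpow hc.le]
    push_cast
    rw [← Complex.betaIntegral_scaled p q hc, ← intervalIntegral.integral_ofReal]
    refine intervalIntegral.integral_congr fun x hx ↦ ?_
    rw [uIcc_of_le hc.le] at hx
    simp only [Complex.ofReal_mul, Complex.ofReal_cpow hx.1,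
      Complex.ofReal_cpow (sub_nonneg.2 hx.2), Complex.ofReal_sub, Complex.ofReal_one]
  rw [beta_eq_betaIntegralReal p q hp hq, ← Complex.re_ofReal_mul, ← hcomplex, Complex.ofReal_re]

lemma integral_sub_rpow_mul_sub_rpow {p q v X : ℝ} (hp : 0 < p) (hq : 0 < q) (hv : v < X) :
    ∫ u in v..X, (X - u) ^ (p - 1) * (u - v) ^ (q - 1) = (X - v) ^ (p + q - 1) * beta p q := by
  have hsub := intervalIntegral.integral_comp_sub_left (a := v) (b := X)
    (fun x ↦ x ^ (p - 1) * (X - v - x) ^ (q - 1)) X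
  simp only [sub_sub_sub_cancel_left, sub_self] at hsub
  rw [hsub, integral_rpow_mul_sub_rpow hp hq (sub_pos.2 hv)]

lemma intervalIntegrable_sub_rpow_mul_sub_rpow {p q v X : ℝ} (hp : 0 < p) (hq : 0 < q)
    (hv : v < X) :
    IntervalIntegrable (fun u ↦ (X - u) ^ (p - 1) * (u - v) ^ (q - 1)) volume v X := by
  refine intervalIntegral.intervalIntegrable_of_integral_ne_zero ?_
  rw [integral_sub_rpow_mul_sub_rpow hp hq hv]
  exact (mul_pos (rpow_pos_of_pos (sub_pos.2 hv) _) (beta_pos hp hq)).ne'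

lemma intervalIntegrable_sub_rpow_mul {r A X : ℝ} {f : ℝ → ℝ} (hr : 0 < r)
    (hf : ContinuousOn f (uIcc A X)) :
    IntervalIntegrable (fun v ↦ (X - v) ^ (r - 1) * f v) volume A X := by
  have hpow : IntervalIntegrable (fun v : ℝ ↦ v ^ (r - 1)) volume (X - A) (X - X) :=
    intervalIntegral.intervalIntegrable_rpow' (by linarith)
  have hpow' := hpow.comp_sub_left X
  simp only [sub_sub_cancel] at hpow'
  exact hpow'.mul_continuousOn hf

section Triangle

variable {E : Type*} [NormedAddCommGroup E] {F : ℝ → ℝ → E} {A v X : ℝ}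

lemma Ioc_inter_Ici_of_lt (hv : A < v) : Ioc A X ∩ Ici v = Icc v X := by
  ext u
  exact ⟨fun h ↦ ⟨h.2, h.1.2⟩, fun h ↦ ⟨⟨hv.trans_le h.1, h.2⟩, h.1⟩⟩

lemma setIntegral_Ioc_indicator_Ici [NormedSpace ℝ E] (hv : v ∈ Ioc A X) (f : ℝ → E) :
    ∫ u in Ioc A X, (Ici v).indicator f u = ∫ u in v..X, f u := by
  rw [setIntegral_indicator measurableSet_Ici, Ioc_inter_Ici_of_lt hv.1,
    integral_Icc_eq_integral_Ioc, intervalIntegral.integral_of_le hv.2]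

lemma integral_integral_triangle_swap [NormedSpace ℝ E] (hAX : A ≤ X)
    (hF : Integrable ({z : ℝ × ℝ | z.2 ≤ z.1}.indicator (Function.uncurry F))
      ((volume.restrict (Ioc A X)).prod (volume.restrict (Ioc A X)))) :
    ∫ u in A..X, ∫ v in A..u, F u v = ∫ v in A..X, ∫ u in v..X, F u v := by
  set G : ℝ → ℝ → E := fun u v ↦ {z : ℝ × ℝ | z.2 ≤ z.1}.indicator (Function.uncurry F) (u, v)
  have hinner : ∀ u ∈ Ioc A X, ∫ v in Ioc A X, G u v = ∫ v in A..u, F u v := by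
    intro u hu
    have hslice : Ioc A X ∩ Iic u = Ioc A u := by
      rw [Ioc_inter_Iic, min_eq_right hu.2]
    rw [intervalIntegral.integral_of_le hu.1.le, ← hslice,
      ← setIntegral_indicator measurableSet_Iic]
    rfl
  have houter : ∀ v ∈ Ioc A X, ∫ u in Ioc A X, G u v = ∫ u in v..X, F u v :=
    fun v hv ↦ setIntegral_Ioc_indicator_Ici hv (F · v)
  rw [intervalIntegral.integral_of_le hAX, intervalIntegral.integral_of_le hAX,
    ← setIntegral_congr_fun measurableSet_Ioc hinner,
    ← setIntegral_congr_fun measurableSet_Ioc houter]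
  exact integral_integral_swap hF

lemma integrable_indicator_triangle (hAX : A ≤ X)
    (hmeas : AEStronglyMeasurable (Function.uncurry F)
      ((volume.restrict (Ioc A X)).prod (volume.restrict (Ioc A X))))
    (hslice : ∀ v ∈ Ioo A X, IntervalIntegrable (F · v) volume v X)
    (hnorm : IntervalIntegrable (fun v ↦ ∫ u in v..X, ‖F u v‖) volume A X) :
    Integrable ({z : ℝ × ℝ | z.2 ≤ z.1}.indicator (Function.uncurry F))
      ((volume.restrict (Ioc A X)).prod (volume.restrict (Ioc A X))) := by
  have hset : MeasurableSet {z : ℝ × ℝ | z.2 ≤ z.1} :=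
    measurableSet_le measurable_snd measurable_fst
  rw [integrable_prod_iff' (hmeas.indicator hset)]
  constructor
  · rw [← restrict_Ioo_eq_restrict_Ioc]
    filter_upwards [ae_restrict_mem measurableSet_Ioo] with v hv
    have hIcc := (intervalIntegrable_iff_integrableOn_Icc_of_le hv.2.le).1 (hslice v hv)
    rw [← Ioc_inter_Ici_of_lt hv.1, inter_comm] at hIcc
    rw [restrict_Ioo_eq_restrict_Ioc]
    exact (integrable_indicator_iff measurableSet_Ici).2
      (by rwa [IntegrableOn, Measure.restrict_restrict measurableSet_Ici])
  · refine ((intervalIntegrable_iff_integrableOn_Ioc_of_le hAX).1 hnorm).congr_fun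
      (fun v hv ↦ ?_) measurableSet_Ioc
    refine (setIntegral_Ioc_indicator_Ici hv (‖F · v‖)).symm.trans ?_
    refine integral_congr_ae (.of_forall fun u ↦ ?_)
    exact (norm_indicator_eq_indicator_norm (s := {z : ℝ × ℝ | z.2 ≤ z.1})
      (Function.uncurry F) (u, v)).symm

end Triangle

lemma integrable_indicator_sub_rpow_mul_sub_rpow_mul {p q A X : ℝ} {f : ℝ → ℝ}
    (hp : 0 < p) (hq : 0 < q) (hAX : A ≤ X)
    (hf : IntervalIntegrable (fun v ↦ (X - v) ^ (p + q - 1) * f v) volume A X) :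
    Integrable ({z : ℝ × ℝ | z.2 ≤ z.1}.indicator
        (Function.uncurry fun u v ↦ (X - u) ^ (p - 1) * (u - v) ^ (q - 1) * f v))
      ((volume.restrict (Ioc A X)).prod (volume.restrict (Ioc A X))) := by
  have hfmeas : AEStronglyMeasurable f (volume.restrict (Ioc A X)) := by
    have hinv : Measurable fun v ↦ ((X - v) ^ (p + q - 1))⁻¹ := by fun_prop
    refine (hinv.aestronglyMeasurable.mul hf.1.aestronglyMeasurable).congr ?_
    rw [← restrict_Ioo_eq_restrict_Ioc]
    filter_upwards [ae_restrict_mem measurableSet_Ioo] with v hv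
    exact inv_mul_cancel_left₀ (rpow_pos_of_pos (sub_pos.2 hv.2) _).ne' _
  refine integrable_indicator_triangle hAX ?_ (fun v hv ↦
    (intervalIntegrable_sub_rpow_mul_sub_rpow hp hq hv.2).mul_const _) ?_
  · have hkernel : Measurable fun z : ℝ × ℝ ↦ (X - z.1) ^ (p - 1) * (z.1 - z.2) ^ (q - 1) := by
      fun_prop
    exact hkernel.aestronglyMeasurable.mul hfmeas.comp_snd
  · refine (hf.norm.const_mul (beta p q)).congr_uIoo fun v hv ↦ ?_
    rw [uIoo_of_le hAX] at hv
    have hnorm : ∀ u ∈ uIcc v X, ‖(X - u) ^ (p - 1) * (u - v) ^ (q - 1) * f v‖ =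
        (X - u) ^ (p - 1) * (u - v) ^ (q - 1) * ‖f v‖ := by
      intro u hu
      rw [uIcc_of_le hv.2.le] at hu
      rw [norm_mul, norm_of_nonneg (mul_nonneg (rpow_nonneg (sub_nonneg.2 hu.2) _)
        (rpow_nonneg (sub_nonneg.2 hu.1) _))]
    calc beta p q * ‖(X - v) ^ (p + q - 1) * f v‖
        = (X - v) ^ (p + q - 1) * beta p q * ‖f v‖ := by
          rw [norm_mul, norm_of_nonneg (rpow_nonneg (sub_nonneg.2 hv.2.le) _)]
          ring
      _ = ∫ u in v..X, (X - u) ^ (p - 1) * (u - v) ^ (q - 1) * ‖f v‖ := by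
          rw [intervalIntegral.integral_mul_const, integral_sub_rpow_mul_sub_rpow hp hq hv.2]
      _ = ∫ u in v..X, ‖(X - u) ^ (p - 1) * (u - v) ^ (q - 1) * f v‖ :=
          (intervalIntegral.integral_congr hnorm).symm

lemma rlI_zero (A : ℝ) (f : ℝ → ℝ) : rlI A 0 f = f := by
  funext X
  exact if_pos rfl

lemma rlI_of_ne_zero {α : ℝ} (hα : α ≠ 0) (A : ℝ) (f : ℝ → ℝ) (X : ℝ) :
    rlI A α f X = (Gamma α)⁻¹ * ∫ t in A..X, (X - t) ^ (α - 1) * f t :=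
  if_neg hα

lemma rlI_one (A : ℝ) (f : ℝ → ℝ) (X : ℝ) : rlI A 1 f X = ∫ t in A..X, f t := by
  simp [rlI_of_ne_zero one_ne_zero]

lemma rlI_rlI {p q A X : ℝ} {f : ℝ → ℝ} (hp : 0 < p) (hq : 0 ≤ q) (hAX : A ≤ X)
    (hf : IntervalIntegrable (fun v ↦ (X - v) ^ (p + q - 1) * f v) volume A X) :
    rlI A p (rlI A q f) X = rlI A (p + q) f X := by
  rcases hq.eq_or_lt with rfl | hq
  · rw [rlI_zero, add_zero]
  have hswap := integral_integral_triangle_swap hAX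
    (F := fun u v ↦ (X - u) ^ (p - 1) * (u - v) ^ (q - 1) * f v)
    (integrable_indicator_sub_rpow_mul_sub_rpow_mul hp hq hAX hf)
  have hbeta : ∫ v in A..X, ∫ u in v..X, (X - u) ^ (p - 1) * (u - v) ^ (q - 1) * f v =
      beta p q * ∫ v in A..X, (X - v) ^ (p + q - 1) * f v := by
    rw [← intervalIntegral.integral_const_mul]
    refine intervalIntegral.integral_congr_Ioo_of_le hAX fun v hv ↦ ?_
    simp only [intervalIntegral.integral_mul_const, integral_sub_rpow_mul_sub_rpow hp hq hv.2]
    ring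
  have hΓp := (Gamma_pos_of_pos hp).ne'
  have hΓq := (Gamma_pos_of_pos hq).ne'
  calc rlI A p (rlI A q f) X
      = (Gamma p)⁻¹ * ∫ u in A..X, (Gamma q)⁻¹ *
          ∫ v in A..u, (X - u) ^ (p - 1) * (u - v) ^ (q - 1) * f v := by
        simp only [rlI_of_ne_zero hp.ne', rlI_of_ne_zero hq.ne', mul_assoc,
          intervalIntegral.integral_const_mul, mul_left_comm _ (Gamma q)⁻¹]
    _ = (Gamma p)⁻¹ * ((Gamma q)⁻¹ * (beta p q *
          ∫ v in A..X, (X - v) ^ (p + q - 1) * f v)) := by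
        rw [intervalIntegral.integral_const_mul, hswap, hbeta]
    _ = rlI A (p + q) f X := by
        rw [rlI_of_ne_zero (add_pos hp hq).ne', beta]
        field_simp

lemma rlI_eq_rpow_mul_integral {q A X : ℝ} (hq : 0 < q) (hAX : A ≤ X) (f : ℝ → ℝ) :
    rlI A q f X =
      (Gamma q)⁻¹ * ((X - A) ^ q * ∫ s in (0 : ℝ)..1, s ^ (q - 1) * f (X - (X - A) * s)) := by
  rw [rlI_of_ne_zero hq.ne']
  congr 1
  rcases hAX.eq_or_lt with rfl | hAX
  · simp [zero_rpow hq.ne']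
  have hpos : 0 < X - A := sub_pos.2 hAX
  have hscale : ∫ s in (0 : ℝ)..1, ((X - A) * s) ^ (q - 1) * f (X - (X - A) * s) =
      (X - A)⁻¹ * ∫ t in A..X, (X - t) ^ (q - 1) * f t := by
    simpa using intervalIntegral.integral_comp_sub_mul (a := 0) (b := 1)
      (fun t ↦ (X - t) ^ (q - 1) * f t) hpos.ne' X
  have hfactor : ∫ s in (0 : ℝ)..1, ((X - A) * s) ^ (q - 1) * f (X - (X - A) * s) =
      (X - A) ^ (q - 1) * ∫ s in (0 : ℝ)..1, s ^ (q - 1) * f (X - (X - A) * s) := by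
    rw [← intervalIntegral.integral_const_mul]
    refine intervalIntegral.integral_congr fun s hs ↦ ?_
    rw [uIcc_of_le zero_le_one] at hs
    simp only [mul_rpow hpos.le hs.1, mul_assoc]
  rw [← mul_inv_cancel_left₀ hpos.ne' (∫ t in A..X, _), ← hscale, hfactor, ← mul_assoc,
    ← rpow_one_add' hpos.le (by linarith), add_sub_cancel]

lemma continuousOn_rlI {q A B : ℝ} {f : ℝ → ℝ} (hq : 0 ≤ q) (hf : ContinuousOn f (Icc A B)) :
    ContinuousOn (rlI A q f) (Icc A B) := by
  rcases hq.eq_or_lt with rfl | hq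
  · rwa [rlI_zero]
  obtain ⟨C, hC⟩ := isCompact_Icc.exists_bound_of_continuousOn hf
  have hmem : ∀ X ∈ Icc A B, ∀ s ∈ Icc (0 : ℝ) 1, X - (X - A) * s ∈ Icc A B := by
    intro X hX s hs
    constructor <;> nlinarith [hX.1, hX.2, hs.1, hs.2]
  have hIcc : uIoc (0 : ℝ) 1 ⊆ Icc 0 1 := uIoc_of_le (zero_le_one (α := ℝ)) ▸ Ioc_subset_Icc_self
  have hint : ContinuousOn
      (fun X ↦ ∫ s in (0 : ℝ)..1, s ^ (q - 1) * f (X - (X - A) * s)) (Icc A B) := by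
    intro X hX
    refine intervalIntegral.continuousWithinAt_of_dominated_interval
      (bound := fun s ↦ s ^ (q - 1) * C) ?_ ?_
      ((intervalIntegral.intervalIntegrable_rpow' (by linarith)).mul_const C) ?_
    · filter_upwards [self_mem_nhdsWithin] with Y hY
      exact (Measurable.aestronglyMeasurable (by fun_prop)).mul
        ((hf.comp (by fun_prop) fun s hs ↦ hmem Y hY s (hIcc hs)).aestronglyMeasurable
          measurableSet_uIoc)
    · filter_upwards [self_mem_nhdsWithin] with Y hY
      refine .of_forall fun s hs ↦ ?_
      have hpow : 0 ≤ s ^ (q - 1) := rpow_nonneg (hIcc hs).1 _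
      rw [norm_mul, norm_of_nonneg hpow]
      exact mul_le_mul_of_nonneg_left (hC _ (hmem Y hY s (hIcc hs))) hpow
    · refine .of_forall fun s hs ↦ continuousWithinAt_const.mul ?_
      exact (hf.comp (by fun_prop) fun Y hY ↦ hmem Y hY s (hIcc hs)) X hX
  refine ContinuousOn.congr ?_ fun X hX ↦ rlI_eq_rpow_mul_integral hq hX.1 f
  exact continuousOn_const.mul
    (((continuousOn_id.sub continuousOn_const).rpow_const fun _ _ ↦ .inr hq.le).mul hint)

lemma hasDerivAt_rlI_one_add {q A B X : ℝ} {f : ℝ → ℝ} (hq : 0 ≤ q)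
    (hf : ContinuousOn f (Icc A B)) (hX : X ∈ Ioo A B) :
    HasDerivAt (rlI A (1 + q) f) (rlI A q f X) X := by
  have hcont := continuousOn_rlI hq hf
  have hprimitive : ∀ Y ∈ Icc A B, rlI A (1 + q) f Y = ∫ u in A..Y, rlI A q f u := by
    intro Y hY
    have hfY : ContinuousOn f (uIcc A Y) := by
      rw [uIcc_of_le hY.1]
      exact hf.mono (Icc_subset_Icc_right hY.2)
    rw [← rlI_rlI one_pos hq hY.1 (intervalIntegrable_sub_rpow_mul (by linarith) hfY), rlI_one]
  have hnhds : Icc A B ∈ 𝓝 X := Icc_mem_nhds hX.1 hX.2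
  have hFTC : HasDerivAt (fun Y ↦ ∫ u in A..Y, rlI A q f u) (rlI A q f X) X :=
    intervalIntegral.integral_hasDerivAt_right
      ((hcont.mono (Icc_subset_Icc_right hX.2.le)).intervalIntegrable_of_Icc hX.1.le)
      ((hcont.mono Ioo_subset_Icc_self).stronglyMeasurableAtFilter isOpen_Ioo X hX)
      (hcont.continuousAt hnhds)
  exact hFTC.congr_of_eventuallyEq (eventually_of_mem hnhds hprimitive)

lemma psiI_eq_rlI {a x p : ℝ} {Ψ f φ : ℝ → ℝ} (hax : a ≤ x) (hΨc : ContinuousOn Ψ (Icc a x))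
    (hΨ' : ∀ t ∈ Ioo a x, 0 < deriv Ψ t) (hf : EqOn f (φ ∘ Ψ) (Icc a x)) :
    psiI a Ψ f p x = rlI (Ψ a) p φ (Ψ x) := by
  unfold psiI rlI
  split_ifs with hp
  · exact hf (right_mem_Icc.2 hax)
  congr 1
  rw [← uIcc_of_le hax] at hΨc hf
  have hsubst := intervalIntegral.integral_comp_mul_deriv_of_deriv_nonneg
    (g := fun u ↦ (Ψ x - u) ^ (p - 1) * φ u) hΨc
    (by
      rw [min_eq_left hax, max_eq_right hax]
      exact fun t ht ↦ (differentiableAt_of_deriv_ne_zero (hΨ' t ht).ne').hasDerivAt)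
    (by
      rw [min_eq_left hax, max_eq_right hax]
      exact fun t ht ↦ (hΨ' t ht).le)
  rw [← hsubst]
  refine intervalIntegral.integral_congr fun t ht ↦ ?_
  simp only [Function.comp_apply, hf ht]
  ring

lemma exists_continuousMap_eqOn_comp {X Y : Type*} [TopologicalSpace X] [TopologicalSpace Y]
    [NormalSpace Y] [T2Space Y] {K : Set X} (hK : IsCompact K) {e : X → Y}
    (he : ContinuousOn e K) (hinj : InjOn e K) {g : X → ℝ} (hg : ContinuousOn g K) :
    ∃ φ : C(Y, ℝ), EqOn g (φ ∘ e) K := by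
  have := isCompact_iff_compactSpace.1 hK
  have hemb : IsClosedEmbedding (K.domRestrict e) :=
    (continuousOn_iff_continuous_domRestrict.1 he).isClosedEmbedding hinj.injective
  obtain ⟨φ, hφ⟩ := ContinuousMap.exists_extension hemb
    ⟨K.domRestrict g, continuousOn_iff_continuous_domRestrict.1 hg⟩
  exact ⟨φ, fun t ht ↦ (DFunLike.congr_fun hφ ⟨t, ht⟩).symm⟩

section DerivPos

variable {a b : ℝ} {Ψ g : ℝ → ℝ}

lemma strictMonoOn_Icc_of_deriv_pos (hΨc : ContinuousOn Ψ (Icc a b))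
    (hΨ' : ∀ t ∈ Ioo a b, 0 < deriv Ψ t) : StrictMonoOn Ψ (Icc a b) :=
  strictMonoOn_of_deriv_pos (convex_Icc a b) hΨc (by rwa [interior_Icc])

lemma exists_continuousMap_psiI_eq_rlI (hΨc : ContinuousOn Ψ (Icc a b))
    (hΨ' : ∀ t ∈ Ioo a b, 0 < deriv Ψ t) (hg : ContinuousOn g (Icc a b)) :
    ∃ φ : C(ℝ, ℝ), ∀ q, EqOn (psiI a Ψ g q) (rlI (Ψ a) q φ ∘ Ψ) (Icc a b) := by
  obtain ⟨φ, hφ⟩ := exists_continuousMap_eqOn_comp isCompact_Icc hΨc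
    (strictMonoOn_Icc_of_deriv_pos hΨc hΨ').injOn hg
  exact ⟨φ, fun q x hx ↦ psiI_eq_rlI hx.1 (hΨc.mono (Icc_subset_Icc_right hx.2))
    (fun t ht ↦ hΨ' t (Ioo_subset_Ioo_right hx.2 ht)) (hφ.mono (Icc_subset_Icc_right hx.2))⟩

lemma psiI_psiI {p q : ℝ} (hab : a ≤ b) (hp : 0 ≤ p) (hq : 0 ≤ q)
    (hΨc : ContinuousOn Ψ (Icc a b)) (hΨ' : ∀ t ∈ Ioo a b, 0 < deriv Ψ t)
    (hg : ContinuousOn g (Icc a b)) :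
    psiI a Ψ (psiI a Ψ g q) p b = psiI a Ψ g (p + q) b := by
  obtain ⟨φ, hφ⟩ := exists_continuousMap_psiI_eq_rlI hΨc hΨ' hg
  have hΨab : Ψ a ≤ Ψ b := (strictMonoOn_Icc_of_deriv_pos hΨc hΨ').monotoneOn
    (left_mem_Icc.2 hab) (right_mem_Icc.2 hab) hab
  rcases hp.eq_or_lt with rfl | hp
  · simp [psiI]
  rw [psiI_eq_rlI hab hΨc hΨ' (hφ q), hφ (p + q) (right_mem_Icc.2 hab)]
  exact rlI_rlI hp hq hΨab
    (intervalIntegrable_sub_rpow_mul (by linarith) φ.continuous.continuousOn)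

lemma hasDerivAt_psiI_one_add {q x : ℝ} (hq : 0 ≤ q) (hΨc : ContinuousOn Ψ (Icc a b))
    (hΨ' : ∀ t ∈ Ioo a b, 0 < deriv Ψ t) (hg : ContinuousOn g (Icc a b)) (hx : x ∈ Ioo a b) :
    HasDerivAt (psiI a Ψ g (1 + q)) (deriv Ψ x * psiI a Ψ g q x) x := by
  obtain ⟨φ, hφ⟩ := exists_continuousMap_psiI_eq_rlI hΨc hΨ' hg
  have hΨx : Ψ x ∈ Ioo (Ψ a) (Ψ b) :=
    (strictMonoOn_Icc_of_deriv_pos hΨc hΨ').mapsTo_Ioo hx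
  have hchain := (hasDerivAt_rlI_one_add hq φ.continuous.continuousOn hΨx).comp x
    (differentiableAt_of_deriv_ne_zero (hΨ' x hx).ne').hasDerivAt
  rw [hφ q (Ioo_subset_Icc_self hx), mul_comm]
  exact hchain.congr_of_eventuallyEq (eventually_of_mem (Icc_mem_nhds hx.1 hx.2) (hφ (1 + q)))

theorem psiRLD_psiI_composition_general {γ δ x : ℝ} (hγ : γ ≤ 1) (hδ : 0 ≤ δ)
    (hΨc : ContinuousOn Ψ (Icc a b)) (hΨ' : ∀ t ∈ Ioo a b, 0 < deriv Ψ t)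
    (hg : ContinuousOn g (Icc a b)) (hx : x ∈ Ioo a b) :
    psiRLD a Ψ (psiI a Ψ g δ) γ x = psiRLD a Ψ g (γ - δ) x := by
  have hsemigroup : ∀ p, 0 ≤ p → EqOn (psiI a Ψ (psiI a Ψ g δ) p) (psiI a Ψ g (p + δ)) (Icc a b) :=
    fun p hp y hy ↦ psiI_psiI hy.1 hp hδ (hΨc.mono (Icc_subset_Icc_right hy.2))
      (fun t ht ↦ hΨ' t (Ioo_subset_Ioo_right hy.2 ht)) (hg.mono (Icc_subset_Icc_right hy.2))
  unfold psiRLD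
  rcases le_or_gt γ 0 with hγ0 | hγ0
  · rw [if_pos hγ0, if_pos (by linarith), hsemigroup _ (neg_nonneg.2 hγ0) (Ioo_subset_Icc_self hx),
      neg_sub, neg_add_eq_sub]
  have hderiv : deriv (psiI a Ψ (psiI a Ψ g δ) (1 - γ)) x = deriv (psiI a Ψ g (1 - γ + δ)) x :=
    ((hsemigroup _ (sub_nonneg.2 hγ)).eventuallyEq_of_mem (Icc_mem_nhds hx.1 hx.2)).deriv_eq
  rw [if_neg hγ0.not_ge, hderiv]
  split_ifs with hγδ
  · have hone : 1 - γ + δ = 1 + -(γ - δ) := by ring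
    rw [hone, (hasDerivAt_psiI_one_add (neg_nonneg.2 hγδ) hΨc hΨ' hg hx).deriv,
      inv_mul_cancel_left₀ (hΨ' x hx).ne', neg_sub]
  · rw [sub_add]

end DerivPos

end

/-- composition identity reducing mixed orders, with `ξ = (1-β)(1-α)`:
`^{RL}D^{α+ξ-l;Ψ} ∘ I^{ξ+m-l;Ψ} = ^{RL}D^{α-m;Ψ}` for naturals `l ≤ m`. -/
theorem psiRLD_psiI_composition
    (a b : ℝ) (hab : a < b) (α β : ℝ)
    (hα0 : 0 < α) (hα1 : α < 1) (hβ0 : 0 < β) (hβ1 : β ≤ 1)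
    (l m : ℕ) (hlm : l ≤ m)
    (Ψ : ℝ → ℝ)
    (hΨmono : StrictMonoOn Ψ (Set.Icc a b))
    (hΨC1 : ContDiffOn ℝ 1 Ψ (Set.Icc a b))
    (hΨpos : ∀ t ∈ Set.Icc a b, 0 < deriv Ψ t)
    (g : ℝ → ℝ) (hg : ContinuousOn g (Set.Icc a b))
    (x : ℝ) (hx : x ∈ Set.Ioo a b) :
    psiRLD a Ψ (fun y => psiI a Ψ g ((1 - β) * (1 - α) + m - l) y)
        (α + (1 - β) * (1 - α) - l) x =
      psiRLD a Ψ g (α - m) x := by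
  have hξ : 0 ≤ (1 - β) * (1 - α) := mul_nonneg (by linarith) (by linarith)
  have hβα : 0 < β * (1 - α) := mul_pos hβ0 (by linarith)
  have hlm' : (l : ℝ) ≤ m := by exact_mod_cast hlm
  have hγ : α + (1 - β) * (1 - α) - l ≤ 1 := by linarith [l.cast_nonneg (α := ℝ)]
  rw [show α - m = α + (1 - β) * (1 - α) - l - ((1 - β) * (1 - α) + m - l) by ring]
  exact psiRLD_psiI_composition_general hγ (by linarith) hΨC1.continuousOn
    (fun t ht ↦ hΨpos t (Set.Ioo_subset_Icc_self ht)) hg hx
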